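/- Approximate Ramsey property for Banach spaces with a distinguished contractive functional: for all finite-dimensional complex normed spaces X and Y equipped with linear functionals s_X : X → ℂ and s_Y : Y → ℂ of norm at most 1, every r ∈ ℕ, and every ε > 0, there exist a finite-dimensional complex normed space Z and a linear functional s_Z : Z → ℂ of norm at most 1 such that for every coloring c of the set of linear isometric embeddings φ : X → Z satisfying s_Z ∘ φ = s_X with r colors, there exist a linear isometric embedding γ : Y → Z with s_Z ∘ γ = s_Y and a color j such that for every linear isometric embedding η : X → Y with s_Y ∘ η = s_X there is a linear isometric embedding ξ : X → Z with s_Z ∘ ξ = s_X, c(ξ) = j, and ‖γ ∘ η − ξ‖ ≤ ε (operator norm). -/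

import Mathlib

universe u

namespace ARPaux

/-- Finite hypergraph whose edges are labelled by an alphabet `A`. -/
structure HG (A : Type) where
  V : Type
  E : Type
  finV : Finite V
  finE : Finite E
  inc : E → A → V

/-- An extension system: labels for vertices and edges. -/
structure Sys (A : Type) (n : ℕ) where
  Φ : Type u
  G : Type u
  val : G → A → Φ
  F : ℕ → Set Φ
  K : Set G
  z : Φ
  g0 : G
  anti : Antitone F
  zF : ∀ j, z ∈ F j
  Fn : ∀ x ∈ F n, x = z
  g0K : g0 ∈ K
  g0z : ∀ a, val g0 a = z
  ext : ∀ j a, ∀ x ∈ F j, ∃ g ∈ K, val g a = x ∧ ∀ b, b ≠ a → val g b ∈ F (j + 1)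

/-- Shift of a system. -/
def Sys.shift {A : Type} {n : ℕ} (S : Sys.{u} A n) (d : ℕ) : Sys.{u} A n where
  Φ := S.Φ
  G := S.G
  val := S.val
  F := fun j => S.F (d + j)
  K := S.K
  z := S.z
  g0 := S.g0
  anti := fun i j h => S.anti (by omega)
  zF := fun j => S.zF _
  Fn := fun x hx => S.Fn x (S.anti (by omega) hx)
  g0K := S.g0K
  g0z := S.g0z
  ext := fun j a x hx => S.ext (d + j) a x hx

/-- Valid labellings. -/
def Valid {A : Type} {n : ℕ} (H : HG A) (S : Sys.{u} A n) (l : H.V → S.Φ) (m : H.E → S.G) : Prop :=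
  ∀ e a, l (H.inc e a) = S.val (m e) a

/-- Vertex-rooted extension; `p` is a partition into parts. -/
def VR {A : Type} (n : ℕ) (H : HG A) (p : H.V → ℕ) : Prop :=
  ∀ (S : Sys.{u} A n) (v : H.V), ∀ x ∈ S.F 0, ∃ (l : H.V → S.Φ) (m : H.E → S.G), Valid H S l m ∧
    (∀ e, m e ∈ S.K) ∧ l v = x ∧ (∀ w, w ≠ v → l w ∈ S.F 1) ∧
    (∀ w, w ≠ v → p w = p v → l w ∈ S.F 2)

/-- Vertex-rooted extension without parts. -/
def VR' {A : Type} (n : ℕ) (H : HG A) : Prop :=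
  ∀ (S : Sys.{u} A n) (v : H.V), ∀ x ∈ S.F 0, ∃ (l : H.V → S.Φ) (m : H.E → S.G), Valid H S l m ∧
    (∀ e, m e ∈ S.K) ∧ l v = x ∧ (∀ w, w ≠ v → l w ∈ S.F 1)

/-- Edge-rooted extension. -/
def ER {A : Type} (n : ℕ) (H : HG A) : Prop :=
  ∀ (S : Sys.{u} A n) (e0 : H.E) (g : S.G), (∀ a, S.val g a ∈ S.F 0) →
    ∃ (l : H.V → S.Φ) (m : H.E → S.G), Valid H S l m ∧
    m e0 = g ∧ (∀ e, e ≠ e0 → m e ∈ S.K) ∧ (∀ w, (∀ a, H.inc e0 a ≠ w) → l w ∈ S.F 1)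

/-- Ramsey property for colourings that are constant on parts with index at least `i`. -/
def Ram {A : Type} (κ : Type) (H : HG A) (p : H.V → ℕ) (i : ℕ) : Prop :=
  ∀ c : H.V → κ, (∀ v w, p v = p w → i ≤ p v → c v = c w) → ∃ e j, ∀ a, c (H.inc e a) = j

/-- Ramsey property. -/
def Ram' {A : Type} (κ : Type) (H : HG A) : Prop :=
  ∀ c : H.V → κ, ∃ e j, ∀ a, c (H.inc e a) = j

open Classical in
/-- A linear hypergraph is good at level one. -/
theorem linear_good {A : Type} (H : HG A) (hinj : ∀ e, Function.Injective (H.inc e))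
    (hlin : ∀ e e' a b a' b', a ≠ b → H.inc e a = H.inc e' a' → H.inc e b = H.inc e' b' → e = e') :
    VR'.{u} 1 H ∧ ER.{u} 1 H := by
  constructor
  · intro S v x hx
    have key : ∀ e : H.E, ∃ g ∈ S.K, ∀ a, (if H.inc e a = v then x else S.z) = S.val g a := by
      intro e
      by_cases h : ∃ a, H.inc e a = v
      · obtain ⟨a, ha⟩ := h
        obtain ⟨g, hg, h1, h2⟩ := S.ext 0 a x hx
        refine ⟨g, hg, fun b => ?_⟩
        by_cases hb : b = a
        · subst hb; rw [if_pos ha, h1]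
        · rw [if_neg, S.Fn _ (h2 b hb)]
          intro h'
          exact hb (hinj e (h'.trans ha.symm))
      · push Not at h
        refine ⟨S.g0, S.g0K, fun b => ?_⟩
        rw [if_neg (h b), S.g0z]
    choose m hm hm' using key
    refine ⟨fun w => if w = v then x else S.z, m, hm', hm, if_pos rfl, fun w hw => ?_⟩
    simp only [if_neg hw]; exact S.zF 1
  · intro S e0 g hg
    let l : H.V → S.Φ := fun w => if h : ∃ a, H.inc e0 a = w then S.val g h.choose else S.z
    have hl1 : ∀ a, l (H.inc e0 a) = S.val g a := by
      intro a
      have h : ∃ b, H.inc e0 b = H.inc e0 a := ⟨a, rfl⟩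
      simp only [l, dif_pos h]
      rw [hinj e0 h.choose_spec]
    have hl2 : ∀ w, (∀ a, H.inc e0 a ≠ w) → l w = S.z := by
      intro w hw
      simp only [l]
      rw [dif_neg]
      push Not
      exact hw
    have key : ∀ e : H.E, ∃ g' : S.G, (e = e0 → g' = g) ∧ (e ≠ e0 → g' ∈ S.K) ∧
        ∀ a, l (H.inc e a) = S.val g' a := by
      intro e
      by_cases he : e = e0
      · subst he
        exact ⟨g, fun _ => rfl, fun h => absurd rfl h, hl1⟩
      by_cases h : ∃ a b, H.inc e0 a = H.inc e b
      · obtain ⟨a, b, hab⟩ := h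
        obtain ⟨g', hg', h1, h2⟩ := S.ext 0 b _ (hg a)
        refine ⟨g', fun h => absurd h he, fun _ => hg', fun b' => ?_⟩
        by_cases hb : b' = b
        · subst hb; rw [h1, ← hab, hl1]
        · rw [S.Fn _ (h2 b' hb)]
          apply hl2
          intro a' h'
          exact he (hlin e e0 b' b a' a hb h'.symm hab.symm)
      · push Not at h
        refine ⟨S.g0, fun h => absurd h he, fun _ => S.g0K, fun b => ?_⟩
        rw [S.g0z]
        exact hl2 _ (fun a => h a b)
    choose m hm0 hm hm' using key
    exact ⟨l, m, hm', hm0 e0 rfl, hm, fun w hw => by rw [hl2 w hw]; exact S.zF 1⟩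

/-- Base case: combinatorial lines. -/
theorem base (κ : Type) [Finite κ] (A : Type) [Finite A] :
    ∃ H : HG A, VR'.{u} 1 H ∧ ER.{u} 1 H ∧ Ram' κ H := by
  obtain ⟨ι, _, hι⟩ := Combinatorics.Line.exists_mono_in_high_dimension A κ
  have hfin : Finite (Combinatorics.Line A ι) := by
    apply Finite.of_injective (β := ι → Option A) (fun l => l.idxFun)
    intro l l' h
    cases l; cases l'; simp only at h; subst h; rfl
  let H : HG A := ⟨ι → A, Combinatorics.Line A ι, inferInstance, hfin, fun l a => l a⟩
  have hval : ∀ (l : Combinatorics.Line A ι) (a : A) (i : ι),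
      l a i = (l.idxFun i).getD a := fun _ _ _ => rfl
  have hg := linear_good.{u} H ?_ ?_
  · exact ⟨H, hg.1, hg.2, fun c => hι c⟩
  · intro l a b h
    obtain ⟨i, hi⟩ := l.proper
    have := congrFun h i
    simpa [H, hval, hi] using this
  · intro l l' a b a' b' hab h1 h2
    have e1 : ∀ i, (l.idxFun i).getD a = (l'.idxFun i).getD a' := fun i => congrFun h1 i
    have e2 : ∀ i, (l.idxFun i).getD b = (l'.idxFun i).getD b' := fun i => congrFun h2 i
    have hA : ∃ i, l.idxFun i = none ∧ l'.idxFun i = none := by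
      obtain ⟨i, hi⟩ := l.proper
      refine ⟨i, hi, ?_⟩
      have := e1 i
      have := e2 i
      cases h : l'.idxFun i <;> simp_all
    obtain ⟨i, hi, hi'⟩ := hA
    have haa : a = a' := by simpa [hi, hi'] using e1 i
    have hbb : b = b' := by simpa [hi, hi'] using e2 i
    subst haa hbb
    have : l.idxFun = l'.idxFun := by
      funext j
      have := e1 j
      have := e2 j
      cases h : l.idxFun j <;> cases h' : l'.idxFun j <;> simp_all
    cases l; cases l'; simp only at this; subst this; rfl

/-- The starting partite system: disjoint edges, one for each embedding of `A` in `Fin N`. -/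
def P0 (A : Type) [Finite A] (N : ℕ) : HG A where
  V := (A ↪ Fin N) × A
  E := A ↪ Fin N
  finV := inferInstance
  finE := inferInstance
  inc := fun e a => (e, a)

open Classical in
theorem P0_good (κ : Type) [Finite κ] [Nonempty κ] (A : Type) [Finite A] (n : ℕ) :
    ∃ N, VR.{u} n (P0 A N) (fun v => (v.1 v.2 : ℕ)) ∧ ER.{u} n (P0 A N) ∧
      Ram κ (P0 A N) (fun v => (v.1 v.2 : ℕ)) 0 ∧ ∀ v : (P0 A N).V, (v.1 v.2 : ℕ) < N := by
  have := Fintype.ofFinite κ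
  have := Fintype.ofFinite A
  refine ⟨Fintype.card κ * Fintype.card A, ?_, ?_, ?_, fun v => (v.1 v.2).2⟩
  · rintro S ⟨e, a⟩ x hx
    obtain ⟨g, hg, h1, h2⟩ := S.ext 0 a x hx
    refine ⟨fun w => if w.1 = e then S.val g w.2 else S.z, fun e' => if e' = e then g else S.g0,
      ?_, ?_, ?_, ?_, ?_⟩
    · intro e' b
      by_cases h : e' = e
      · exact (if_pos h).trans (congrArg (fun q => S.val q b) (if_pos h).symm)
      · exact (if_neg h).trans
          ((S.g0z b).symm.trans (congrArg (fun q => S.val q b) (if_neg h).symm))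
    · intro e'
      dsimp only
      split_ifs
      · exact hg
      · exact S.g0K
    · simpa using h1
    · rintro ⟨e', b⟩ hw
      dsimp only
      split_ifs with h
      · apply h2
        rintro rfl
        exact hw (by rw [← h])
      · exact S.zF 1
    · rintro ⟨e', b⟩ hw hp
      dsimp only at hp ⊢
      split_ifs with h
      · exfalso
        subst h
        apply hw
        have : b = a := e'.injective (Fin.ext hp)
        rw [this]
      · exact S.zF 2
  · rintro S e g hg
    refine ⟨fun w => if w.1 = e then S.val g w.2 else S.z, fun e' => if e' = e then g else S.g0,
      ?_, if_pos rfl, ?_, ?_⟩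
    · intro e' b
      by_cases h : e' = e
      · exact (if_pos h).trans (congrArg (fun q => S.val q b) (if_pos h).symm)
      · exact (if_neg h).trans
          ((S.g0z b).symm.trans (congrArg (fun q => S.val q b) (if_neg h).symm))
    · intro e' he
      simp only [if_neg he]
      exact S.g0K
    · rintro ⟨e', b⟩ hw
      have : e' ≠ e := by
        rintro rfl
        exact hw b rfl
      simp only [if_neg this]
      exact S.zF 1
  · intro c hc
    let f : (A ↪ Fin (Fintype.card κ * Fintype.card A)) × A → Fin (Fintype.card κ * Fintype.card A) :=
      fun v => v.1 v.2
    have hf : Function.FactorsThrough c f := by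
      intro v w h
      exact hc v w (congrArg Fin.val h) (Nat.zero_le _)
    let C := Function.extend f c (fun _ => Classical.arbitrary κ)
    obtain ⟨j, hj⟩ := Fintype.exists_le_card_fiber_of_mul_le_card C
      (n := Fintype.card A) (by simp)
    have : Nonempty (A ↪ {x // C x = j}) := by
      apply Function.Embedding.nonempty_of_card_le
      rw [Fintype.card_subtype]
      exact hj
    obtain ⟨i⟩ := this
    let e : A ↪ Fin (Fintype.card κ * Fintype.card A) := i.trans (Function.Embedding.subtype _)
    refine ⟨e, j, fun a => ?_⟩
    have h1 : C (f (e, a)) = c (e, a) := hf.extend_apply _ _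
    have h2 : C (f (e, a)) = j := (i a).2
    exact h1.symm.trans h2

section step
variable {A : Type} (P : HG A) (p : P.V → ℕ) (i : ℕ) (H : HG {v : P.V // p v = i})

open Classical in
/-- Amalgamation of copies of `P` along part `i`, over the hypergraph `H`. -/
noncomputable def amal : HG A where
  V := H.V ⊕ (H.E × {v : P.V // p v ≠ i})
  E := H.E × P.E
  finV := by
    have := P.finV; have := H.finV; have := H.finE
    infer_instance
  finE := by
    have := P.finE; have := H.finE
    infer_instance
  inc := fun e a => if h : p (P.inc e.2 a) = i then Sum.inl (H.inc e.1 ⟨P.inc e.2 a, h⟩)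
    else Sum.inr (e.1, ⟨P.inc e.2 a, h⟩)

/-- Parts of the amalgamation. -/
def amalp : (amal P p i H).V → ℕ
  | Sum.inl _ => i
  | Sum.inr w => p w.2.1

theorem amal_ram (κ : Type) (hP : Ram κ P p i) (hH : Ram' κ H) :
    Ram κ (amal P p i H) (amalp P p i H) (i + 1) := by
  classical
  intro c hc
  obtain ⟨h, j0, hj0⟩ := hH (fun v => c (Sum.inl v))
  let cp : P.V → (amal P p i H).V := fun v =>
    if hv : p v = i then Sum.inl (H.inc h ⟨v, hv⟩) else Sum.inr (h, ⟨v, hv⟩)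
  have hc1 : ∀ v (hv : p v = i), cp v = Sum.inl (H.inc h ⟨v, hv⟩) := fun v hv => dif_pos hv
  have hc2 : ∀ v (hv : p v ≠ i), cp v = Sum.inr (h, ⟨v, hv⟩) := fun v hv => dif_neg hv
  have hcp : ∀ v, amalp P p i H (cp v) = p v := by
    intro v
    by_cases hv : p v = i
    · rw [hc1 v hv]; exact hv.symm
    · rw [hc2 v hv]; rfl
  obtain ⟨e, j, hj⟩ := hP (fun v => c (cp v)) (by
    intro v w hvw hv
    by_cases hi : p v = i
    · have hi' : p w = i := hvw ▸ hi
      change c (cp v) = c (cp w)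
      rw [hc1 v hi, hc1 w hi', hj0, hj0]
    · apply hc
      · rw [hcp, hcp, hvw]
      · rw [hcp]; omega)
  exact ⟨(h, e), j, hj⟩

variable {n : ℕ}

/-- The system on `H` whose edge labels are valid labellings of `P`. -/
def sysH (hP : VR.{u} (2 * n) P p) (S : Sys.{u} A (2 * n)) (d : ℕ) :
    Sys.{u} {v : P.V // p v = i} n where
  Φ := S.Φ
  G := {w : (P.V → S.Φ) × (P.E → S.G) // Valid P S w.1 w.2}
  val := fun w m => w.1.1 m.1
  F := fun j => S.F (d + 2 * j)
  K := {w | (∀ e, w.1.2 e ∈ S.K) ∧ ∀ v, p v ≠ i → w.1.1 v ∈ S.F (d + 1)}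
  z := S.z
  g0 := ⟨(fun _ => S.z, fun _ => S.g0), fun e a => (S.g0z a).symm⟩
  anti := fun a b h => S.anti (by omega)
  zF := fun j => S.zF _
  Fn := fun x hx => S.Fn x (S.anti (by omega) hx)
  g0K := ⟨fun e => S.g0K, fun v _ => S.zF _⟩
  g0z := fun a => rfl
  ext := by
    rintro j ⟨v, hv⟩ x hx
    obtain ⟨l, m, h1, h2, h3, h4, h5⟩ := hP (S.shift (d + 2 * j)) v x hx
    refine ⟨⟨(l, m), h1⟩, ⟨h2, fun w hw => ?_⟩, h3, ?_⟩
    · have : w ≠ v := by rintro rfl; exact hw hv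
      exact S.anti (by omega) (h4 w this)
    · rintro ⟨w, hw⟩ hwv
      exact h5 w (fun h => hwv (Subtype.ext h)) (hw.trans hv.symm)

theorem amal_valid (hP : VR.{u} (2 * n) P p) (S : Sys.{u} A (2 * n)) (d : ℕ)
    (l : H.V → S.Φ) (m : H.E → {w : (P.V → S.Φ) × (P.E → S.G) // Valid P S w.1 w.2})
    (hv : Valid H (sysH P p i hP S d) l m) :
    Valid (amal P p i H) S (Sum.elim l (fun w => (m w.1).1.1 w.2.1)) (fun e => (m e.1).1.2 e.2) := by
  rintro ⟨h, e⟩ a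
  have h0 := (m h).2 e a
  by_cases hp : p (P.inc e a) = i
  · simp only [amal, dif_pos hp, Sum.elim_inl]
    rw [← h0]
    exact hv h ⟨_, hp⟩
  · simp only [amal, dif_neg hp, Sum.elim_inr]
    exact h0

theorem amal_VR (hP : VR.{u} (2 * n) P p) (hV : VR'.{u} n H) (hE : ER.{u} n H) :
    VR.{u} (2 * n) (amal P p i H) (amalp P p i H) := by
  rintro S (v | ⟨h, v, hv⟩) x hx
  · obtain ⟨l, m, h1, h2, h3, h4⟩ := hV (sysH P p i hP S 0) v x hx
    refine ⟨_, _, amal_valid P p i H hP S 0 l m h1, fun e => (h2 e.1).1 e.2, h3, ?_, ?_⟩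
    · rintro (w | ⟨h', w, hw⟩) hne
      · exact S.anti (by omega) (h4 w (fun h => hne (congrArg _ h)))
      · exact (h2 h').2 w hw
    · rintro (w | ⟨h', w, hw⟩) hne hpp
      · exact h4 w (fun h => hne (congrArg _ h))
      · exact absurd hpp hw
  · obtain ⟨l0, m0, k1, k2, k3, k4, k5⟩ := hP S v x hx
    obtain ⟨l, m, h1, h2, h3, h4⟩ := hE (sysH P p i hP S 1) h ⟨(l0, m0), k1⟩ (by
      rintro ⟨w, hw⟩
      exact k4 w (by rintro rfl; exact hv hw))
    have hval : ∀ w : {w : P.V // p w = i}, l (H.inc h w) = l0 w.1 := by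
      intro w
      rw [h1 h w, h2]; rfl
    have hF : ∀ w : H.V, l w ∈ S.F 1 := by
      intro w
      by_cases hw : ∃ a, H.inc h a = w
      · obtain ⟨a, rfl⟩ := hw
        rw [hval]
        exact k4 a.1 (by rintro h'; exact hv (h' ▸ a.2))
      · push Not at hw
        exact S.anti (by omega) (h4 w hw)
    refine ⟨_, _, amal_valid P p i H hP S 1 l m h1, ?_, ?_, ?_, ?_⟩
    · rintro ⟨h', e⟩
      by_cases hh : h' = h
      · subst hh
        change (m h').1.2 e ∈ _
        rw [h2]; exact k2 e
      · exact (h3 h' hh).1 e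
    · change (m h).1.1 v = x
      rw [h2]; exact k3
    · rintro (w | ⟨h', w, hw⟩) hne
      · exact hF w
      · by_cases hh : h' = h
        · subst hh
          change (m h').1.1 w ∈ _
          rw [h2]; exact k4 w (by rintro rfl; exact hne rfl)
        · exact S.anti (by omega) ((h3 h' hh).2 w hw)
    · rintro (w | ⟨h', w, hw⟩) hne hpp
      · exact absurd hpp.symm hv
      · by_cases hh : h' = h
        · subst hh
          change (m h').1.1 w ∈ _
          rw [h2]; exact k5 w (by rintro rfl; exact hne rfl) hpp
        · exact (h3 h' hh).2 w hw

theorem amal_ER (hP : VR.{u} (2 * n) P p) (hPE : ER.{u} (2 * n) P) (hE : ER.{u} n H) :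
    ER.{u} (2 * n) (amal P p i H) := by
  rintro S ⟨h, e⟩ g hg
  obtain ⟨l0, m0, k1, k2, k3, k4⟩ := hPE S e g hg
  obtain ⟨l, m, h1, h2, h3, h4⟩ := hE (sysH P p i hP S 0) h ⟨(l0, m0), k1⟩ (by
    rintro ⟨w, hw⟩
    change l0 w ∈ S.F 0
    by_cases hwe : ∃ a, P.inc e a = w
    · obtain ⟨a, rfl⟩ := hwe
      rw [k1 e a, k2]; exact hg a
    · push Not at hwe
      exact S.anti (by omega) (k4 w hwe))
  have hval : ∀ w : {w : P.V // p w = i}, l (H.inc h w) = l0 w.1 := by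
    intro w
    rw [h1 h w, h2]; rfl
  refine ⟨_, _, amal_valid P p i H hP S 0 l m h1, ?_, ?_, ?_⟩
  · change (m h).1.2 e = g
    rw [h2]; exact k2
  · rintro ⟨h', e'⟩ hne
    by_cases hh : h' = h
    · subst hh
      change (m h').1.2 e' ∈ _
      rw [h2]; exact k3 e' (by rintro rfl; exact hne rfl)
    · exact (h3 h' hh).1 e'
  · rintro (w | ⟨h', w, hw⟩) hne
    · change l w ∈ S.F 1
      by_cases hwh : ∃ a, H.inc h a = w
      · obtain ⟨⟨a, ha⟩, rfl⟩ := hwh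
        rw [hval]
        apply k4
        rintro b rfl
        apply hne b
        simp only [amal, dif_pos ha]
      · push Not at hwh
        exact S.anti (by omega) (h4 w hwh)
    · by_cases hh : h' = h
      · subst hh
        change (m h').1.1 w ∈ _
        rw [h2]
        apply k4
        rintro b rfl
        apply hne b
        simp only [amal, dif_neg hw]
      · exact (h3 h' hh).2 w hw

end step

theorem exists_good (κ : Type) [Finite κ] [Nonempty κ] (k : ℕ) : ∀ (A : Type) [Finite A],
    ∃ H : HG A, VR'.{u} (2 ^ k) H ∧ ER.{u} (2 ^ k) H ∧ Ram' κ H := by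
  induction k with
  | zero => intro A _; simpa using base.{u} κ A
  | succ k ih =>
    intro A _
    obtain ⟨N, hN1, hN2, hN3, hN4⟩ := P0_good.{u} κ A (2 * 2 ^ k)
    have key : ∀ i : ℕ, ∃ (P : HG A) (p : P.V → ℕ), VR.{u} (2 * 2 ^ k) P p ∧
        ER.{u} (2 * 2 ^ k) P ∧ Ram κ P p i ∧ (i ≤ N → ∀ v, p v < N) := by
      intro i
      induction i with
      | zero => exact ⟨_, _, hN1, hN2, hN3, fun _ => hN4⟩
      | succ i ihi =>
        obtain ⟨P, p, h1, h2, h3, h4⟩ := ihi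
        have := P.finV
        obtain ⟨H, g1, g2, g3⟩ := ih {v : P.V // p v = i}
        refine ⟨amal P p i H, amalp P p i H, amal_VR P p i H h1 g1 g2, amal_ER P p i H h1 h2 g2,
          amal_ram P p i H κ h3 g3, ?_⟩
        rintro hi (w | ⟨h', w, hw⟩)
        · change i < N
          omega
        · exact h4 (by omega) w
    obtain ⟨P, p, h1, h2, h3, h4⟩ := key N
    refine ⟨P, ?_, ?_, ?_⟩
    · rw [pow_succ, mul_comm]
      intro S v x hx
      obtain ⟨l, m, k1, k2, k3, k4, -⟩ := h1 S v x hx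
      exact ⟨l, m, k1, k2, k3, k4⟩
    · rw [pow_succ, mul_comm]
      exact h2
    · intro c
      exact h3 c (fun v w _ hv => absurd (h4 le_rfl v) (by omega))

end ARPaux

namespace ARPaux
open scoped BoundedContinuousFunction

/-- Evaluation map into bounded functions on a discrete index set. -/
noncomputable def J {W : Type u} [NormedAddCommGroup W] [NormedSpace ℂ W]
    (T : Type u) [TopologicalSpace T] [DiscreteTopology T]
    (φ : T → (W →L[ℂ] ℂ)) (hφ : ∀ t, ‖φ t‖ ≤ 1) : W →L[ℂ] (T →ᵇ ℂ) :=
  LinearMap.mkContinuous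
    { toFun := fun w => BoundedContinuousFunction.ofNormedAddCommGroupDiscrete
        (fun t => φ t w) ‖w‖ (fun t => (φ t).le_of_opNorm_le (hφ t) w |>.trans (by simp))
      map_add' := fun v w => by ext t; simp
      map_smul' := fun c w => by ext t; simp } 1 (fun w => by
        rw [one_mul]
        exact (BoundedContinuousFunction.norm_le (norm_nonneg w)).2
          (fun t => (φ t).le_of_opNorm_le (hφ t) w |>.trans (by simp)))

theorem J_apply {W : Type u} [NormedAddCommGroup W] [NormedSpace ℂ W]
    (T : Type u) [TopologicalSpace T] [DiscreteTopology T]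
    (φ : T → (W →L[ℂ] ℂ)) (hφ : ∀ t, ‖φ t‖ ≤ 1) (w : W) (t : T) : J T φ hφ w t = φ t w := rfl

theorem J_norm {W : Type u} [NormedAddCommGroup W] [NormedSpace ℂ W]
    (T : Type u) [TopologicalSpace T] [DiscreteTopology T]
    (φ : T → (W →L[ℂ] ℂ)) (hφ : ∀ t, ‖φ t‖ ≤ 1) (hs : ∀ f : W →L[ℂ] ℂ, ‖f‖ ≤ 1 → ∃ t, φ t = f)
    (w : W) : ‖J T φ hφ w‖ = ‖w‖ := by
  apply le_antisymm
  · exact (BoundedContinuousFunction.norm_le (norm_nonneg w)).2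
          (fun t => (φ t).le_of_opNorm_le (hφ t) w |>.trans (by simp))
  · obtain ⟨f, hf, hfw⟩ := exists_dual_vector'' ℂ w
    obtain ⟨t, ht⟩ := hs f hf
    have := (J T φ hφ w).norm_coe_le_norm t
    rw [J_apply, ht, hfw] at this
    simpa using this

/-- Extension of a functional along an isometric embedding. -/
theorem ext_iso {X Y : Type u} [NormedAddCommGroup X] [NormedSpace ℂ X]
    [NormedAddCommGroup Y] [NormedSpace ℂ Y] (η : X →L[ℂ] Y) (hη : ∀ x, ‖η x‖ = ‖x‖)
    (f : X →L[ℂ] ℂ) : ∃ g : Y →L[ℂ] ℂ, ‖g‖ ≤ ‖f‖ ∧ g.comp η = f := by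
  let i : X →ₗᵢ[ℂ] Y := ⟨η.toLinearMap, hη⟩
  let q := i.equivRange
  obtain ⟨g, hg, hn⟩ := exists_extension_norm_eq (LinearMap.range i.toLinearMap)
    (f.comp (q.symm.toContinuousLinearEquiv : _ →L[ℂ] X))
  refine ⟨g, ?_, ?_⟩
  · rw [hn]
    apply ContinuousLinearMap.opNorm_le_bound _ (norm_nonneg _)
    intro y
    refine (f.le_opNorm _).trans_eq ?_
    congr 1
    exact q.symm.norm_map y
  · ext x
    have := hg (q x)
    have h2 : ((q x : LinearMap.range i.toLinearMap) : Y) = η x := rfl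
    rw [h2] at this
    simp only [ContinuousLinearMap.comp_apply]
    rw [this]
    exact congrArg f (q.symm_apply_apply x)

section space
variable {X Y : Type u} [NormedAddCommGroup X] [NormedSpace ℂ X]
    [NormedAddCommGroup Y] [NormedSpace ℂ Y] {A : Type} (η : A → (X →L[ℂ] Y))

/-- The heights. -/
noncomputable def rho (n j : ℕ) : ℝ := max 0 (1 - (j : ℝ) / n)

theorem rho_anti (n : ℕ) : Antitone (rho n) := by
  intro i j h
  unfold rho
  gcongr

theorem rho_step (n j : ℕ) : rho n j ≤ rho n (j + 1) + 1 / n := by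
  unfold rho
  have h : (0 : ℝ) ≤ 1 / n := by positivity
  apply max_le
  · have := le_max_left 0 (1 - ((j + 1 : ℕ) : ℝ) / n)
    linarith
  · have := le_max_right 0 (1 - ((j + 1 : ℕ) : ℝ) / n)
    have h2 : ((j + 1 : ℕ) : ℝ) / n = (j : ℝ) / n + 1 / n := by push_cast; ring
    linarith

open Classical in
/-- The system of functionals. -/
noncomputable def sysD (hη : ∀ a x, ‖η a x‖ = ‖x‖) (n : ℕ) (hn : 0 < n) : Sys.{u} A n where
  Φ := X →L[ℂ] ℂ
  G := (Y →L[ℂ] ℂ) × (A → (X →L[ℂ] ℂ))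
  val := fun g a => g.2 a
  F := fun j => {f | ‖f‖ ≤ rho n j}
  K := {g | ‖g.1‖ ≤ 1 ∧ ∀ a, ‖g.2 a‖ ≤ 1 ∧ ‖g.1.comp (η a) - g.2 a‖ ≤ 1 / n}
  z := 0
  g0 := 0
  anti := fun i j h f hf => le_trans hf (rho_anti n h)
  zF := fun j => by simp [rho]
  Fn := fun x hx => by
    have h : rho n n = 0 := by
      have : (n : ℝ) ≠ 0 := by positivity
      simp [rho, this]
    have hx' : ‖x‖ ≤ rho n n := hx
    rw [h] at hx'
    exact norm_le_zero_iff.1 hx'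
  g0K := by simp
  g0z := fun a => rfl
  ext := by
    intro j a x hx
    have hx' : ‖x‖ ≤ rho n j := hx
    have h0 : 0 ≤ rho n (j + 1) := le_max_left _ _
    have hr1 : ∀ k, rho n k ≤ 1 := by
      intro k
      have : (0 : ℝ) ≤ (k : ℝ) / n := by positivity
      exact max_le zero_le_one (by linarith)
    obtain ⟨x', h1, h2⟩ : ∃ x' : X →L[ℂ] ℂ, ‖x'‖ ≤ rho n (j + 1) ∧ ‖x' - x‖ ≤ 1 / n := by
      by_cases h : ‖x‖ ≤ rho n (j + 1)
      · exact ⟨x, h, by simp⟩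
      · push Not at h
        have hx0 : 0 < ‖x‖ := h0.trans_lt h
        refine ⟨((rho n (j + 1) / ‖x‖ : ℝ) : ℂ) • x, ?_, ?_⟩
        · rw [norm_smul, Complex.norm_real, Real.norm_of_nonneg (by positivity)]
          field_simp
          exact le_rfl
        · have : ((rho n (j + 1) / ‖x‖ : ℝ) : ℂ) • x - x
              = ((rho n (j + 1) / ‖x‖ - 1 : ℝ) : ℂ) • x := by
            ext y; simp [sub_mul]
          rw [this, norm_smul, Complex.norm_real, Real.norm_of_nonpos, neg_sub, sub_mul, one_mul,
            div_mul_cancel₀ _ hx0.ne']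
          · linarith [rho_step n j]
          · rw [sub_nonpos, div_le_one hx0]; exact h.le
    obtain ⟨g, hg1, hg2⟩ := ext_iso (η a) (hη a) x'
    have hgη : ∀ b, ‖g.comp (η b)‖ ≤ rho n (j + 1) := by
      intro b
      apply ContinuousLinearMap.opNorm_le_bound _ h0
      intro y
      rw [ContinuousLinearMap.comp_apply, ← hη b y]
      exact g.le_of_opNorm_le (hg1.trans h1) _
    refine ⟨(g, fun b => if b = a then x else g.comp (η b)),
      ⟨hg1.trans (h1.trans (hr1 _)), fun b => ?_⟩, if_pos rfl, fun b hb => ?_⟩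
    · dsimp only
      split_ifs with h
      · subst h
        exact ⟨hx'.trans (hr1 _), by rw [hg2]; exact h2⟩
      · exact ⟨(hgη b).trans (hr1 _), by simp⟩
    · simp only [if_neg hb]
      exact hgη b

/-- Index set: approximately compatible families of functionals. -/
def Idx (H : HG A) (n : ℕ) : Type u :=
  {w : (H.V → (X →L[ℂ] ℂ)) × (H.E → (Y →L[ℂ] ℂ)) // (∀ v, ‖w.1 v‖ ≤ 1) ∧ (∀ e, ‖w.2 e‖ ≤ 1) ∧
    ∀ e a, ‖(w.2 e).comp (η a) - w.1 (H.inc e a)‖ ≤ 1 / n}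

theorem Idx_V (hη : ∀ a x, ‖η a x‖ = ‖x‖) (n : ℕ) (hn : 0 < n) (H : HG A) (hV : VR'.{u} n H)
    (v : H.V) (f : X →L[ℂ] ℂ) (hf : ‖f‖ ≤ 1) : ∃ t : Idx η H n, t.1.1 v = f := by
  obtain ⟨l, m, h1, h2, h3, h4⟩ : ∃ (l : H.V → (X →L[ℂ] ℂ))
      (m : H.E → (Y →L[ℂ] ℂ) × (A → (X →L[ℂ] ℂ))), (∀ e a, l (H.inc e a) = (m e).2 a) ∧ 
      (∀ e, m e ∈ (sysD η hη n hn).K) ∧ l v = f ∧ (∀ w, w ≠ v → ‖l w‖ ≤ rho n 1) := hV (sysD η hη n hn) v f (by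
    change ‖f‖ ≤ rho n 0
    simpa [rho] using hf)
  refine ⟨⟨(l, fun e => (m e).1), ?_, fun e => (h2 e).1, fun e a => ?_⟩, h3⟩
  · intro w
    by_cases hw : w = v
    · subst hw; exact (congrArg norm h3).trans_le hf
    · have h5 : ‖l w‖ ≤ rho n 1 := h4 w hw
      refine h5.trans (max_le zero_le_one ?_)
      have : (0 : ℝ) ≤ ((1 : ℕ) : ℝ) / n := by positivity
      linarith
  · have h5 := ((h2 e).2 a).2
    have h6 : l (H.inc e a) = (m e).2 a := h1 e a
    change ‖(m e).1.comp (η a) - l (H.inc e a)‖ ≤ _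
    rw [h6]
    exact h5

theorem Idx_E (hη : ∀ a x, ‖η a x‖ = ‖x‖) (n : ℕ) (hn : 0 < n) (H : HG A) (hE : ER.{u} n H)
    (e : H.E) (g : Y →L[ℂ] ℂ) (hg : ‖g‖ ≤ 1) : ∃ t : Idx η H n, t.1.2 e = g := by
  have hgη : ∀ b, ‖g.comp (η b)‖ ≤ 1 := by
    intro b
    apply ContinuousLinearMap.opNorm_le_bound _ zero_le_one
    intro y
    rw [ContinuousLinearMap.comp_apply, ← hη b y]
    exact g.le_of_opNorm_le hg _
  obtain ⟨l, m, h1, h2, h3, h4⟩ : ∃ (l : H.V → (X →L[ℂ] ℂ))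
      (m : H.E → (Y →L[ℂ] ℂ) × (A → (X →L[ℂ] ℂ))), (∀ e a, l (H.inc e a) = (m e).2 a) ∧ 
      m e = (g, fun b => g.comp (η b)) ∧ (∀ e', e' ≠ e → m e' ∈ (sysD η hη n hn).K) ∧
      (∀ w, (∀ a, H.inc e a ≠ w) → ‖l w‖ ≤ rho n 1) := hE (sysD η hη n hn) e (g, fun b => g.comp (η b)) (by
    intro b
    change ‖g.comp (η b)‖ ≤ rho n 0
    simpa [rho] using hgη b)
  have hK : ∀ e', m e' ∈ (sysD η hη n hn).K := by
    intro e'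
    by_cases h : e' = e
    · rw [h, h2]
      refine ⟨hg, fun b => ⟨hgη b, ?_⟩⟩
      simp
    · exact h3 e' h
  refine ⟨⟨(l, fun e => (m e).1), ?_, fun e => (hK e).1, fun e a => ?_⟩, congrArg Prod.fst h2⟩
  · intro w
    by_cases hw : ∃ a, H.inc e a = w
    · obtain ⟨a, rfl⟩ := hw
      have h6 : l (H.inc e a) = (m e).2 a := h1 e a
      exact (congrArg norm h6).trans_le ((hK e).2 a).1
    · push Not at hw
      have h5 : ‖l w‖ ≤ rho n 1 := h4 w hw
      refine h5.trans (max_le zero_le_one ?_)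
      have : (0 : ℝ) ≤ ((1 : ℕ) : ℝ) / n := by positivity
      linarith
  · have h5 := ((hK e).2 a).2
    have h6 : l (H.inc e a) = (m e).2 a := h1 e a
    change ‖(m e).1.comp (η a) - l (H.inc e a)‖ ≤ _
    rw [h6]
    exact h5

end space

/-- The Ramsey statement for a finite family of embeddings. -/
theorem finite_ramsey (X Y : Type u) [NormedAddCommGroup X] [NormedSpace ℂ X]
    [FiniteDimensional ℂ X] [NormedAddCommGroup Y] [NormedSpace ℂ Y] [FiniteDimensional ℂ Y]
    (sX : X →L[ℂ] ℂ) (hsX : ‖sX‖ ≤ 1) (sY : Y →L[ℂ] ℂ) (hsY : ‖sY‖ ≤ 1)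
    (r : ℕ) (hr : 0 < r) (δ : ℝ) (hδ : 0 < δ) (A : Type) [Finite A] (η : A → (X →L[ℂ] Y))
    (hη : ∀ a x, ‖η a x‖ = ‖x‖) (hs : ∀ a, sY.comp (η a) = sX) :
    ∃ (Z : Type u) (_ : NormedAddCommGroup Z) (_ : NormedSpace ℂ Z)
      (_ : FiniteDimensional ℂ Z) (sZ : Z →L[ℂ] ℂ), ‖sZ‖ ≤ 1 ∧
      ∀ c : {φ : X →L[ℂ] Z // (∀ x, ‖φ x‖ = ‖x‖) ∧ sZ.comp φ = sX} → Fin r,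
        ∃ (γ : Y →L[ℂ] Z) (_ : ∀ y, ‖γ y‖ = ‖y‖) (_ : sZ.comp γ = sY) (j : Fin r),
          ∀ a, ∃ (ξ : X →L[ℂ] Z) (hξ : (∀ x, ‖ξ x‖ = ‖x‖) ∧ sZ.comp ξ = sX),
              c ⟨ξ, hξ⟩ = j ∧ ‖γ.comp (η a) - ξ‖ ≤ δ := by
  have : Nonempty (Fin r) := ⟨⟨0, hr⟩⟩
  obtain ⟨k, hk⟩ := exists_pow_lt_of_lt_one hδ (show (1 / 2 : ℝ) < 1 by norm_num)
  have hn : 0 < 2 ^ k := by positivity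
  have hnδ : (1 : ℝ) / ((2 ^ k : ℕ) : ℝ) ≤ δ := by
    push_cast
    rw [← one_div_pow]
    exact hk.le
  obtain ⟨H, hV, hE, hR⟩ := exists_good.{u} (Fin r) k A
  generalize 2 ^ k = n at *
  have := H.finV
  have := H.finE
  let T := Idx η H n
  let _ : TopologicalSpace T := ⊥
  have : DiscreteTopology T := ⟨rfl⟩
  let ι : H.V → (X →L[ℂ] (T →ᵇ ℂ)) := fun v => J T (fun t => t.1.1 v) (fun t => t.2.1 v)
  let κ : H.E → (Y →L[ℂ] (T →ᵇ ℂ)) := fun e => J T (fun t => t.1.2 e) (fun t => t.2.2.1 e)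
  have hι : ∀ v x, ‖ι v x‖ = ‖x‖ := fun v x => J_norm T _ _ (Idx_V η hη n hn H hV v) x
  have hκ : ∀ e x, ‖κ e x‖ = ‖x‖ := fun e x => J_norm T _ _ (Idx_E η hη n hn H hE e) x
  let Z : Submodule ℂ (T →ᵇ ℂ) :=
    (⨆ v, LinearMap.range (ι v).toLinearMap) ⊔ (⨆ e, LinearMap.range (κ e).toLinearMap)
  have hZι : ∀ v x, ι v x ∈ Z := fun v x =>
    Submodule.mem_sup_left (Submodule.mem_iSup_of_mem v ⟨x, rfl⟩)
  have hZκ : ∀ e x, κ e x ∈ Z := fun e x =>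
    Submodule.mem_sup_right (Submodule.mem_iSup_of_mem e ⟨x, rfl⟩)
  let t0 : T := ⟨(fun _ => sX, fun _ => sY), fun _ => hsX, fun _ => hsY, fun e a => by
    simp [hs a]⟩
  let sZ : Z →L[ℂ] ℂ := (BoundedContinuousFunction.evalCLM ℂ t0).comp Z.subtypeL
  let ι' : H.V → (X →L[ℂ] Z) := fun v => (ι v).codRestrict Z (hZι v)
  let κ' : H.E → (Y →L[ℂ] Z) := fun e => (κ e).codRestrict Z (hZκ e)
  have hι' : ∀ v, (∀ x, ‖ι' v x‖ = ‖x‖) ∧ sZ.comp (ι' v) = sX := fun v =>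
    ⟨fun x => hι v x, by ext x; rfl⟩
  refine ⟨Z, inferInstance, inferInstance, ?_, sZ, ?_, ?_⟩
  · infer_instance
  · apply ContinuousLinearMap.opNorm_le_bound _ zero_le_one
    intro y
    rw [one_mul]
    exact (y : T →ᵇ ℂ).norm_coe_le_norm t0
  · intro c
    obtain ⟨e, j, hj⟩ := hR (fun v => c ⟨ι' v, hι' v⟩)
    refine ⟨κ' e, fun y => hκ e y, by ext y; rfl, j, fun a => ⟨ι' (H.inc e a), hι' _, hj a, ?_⟩⟩
    apply ContinuousLinearMap.opNorm_le_bound _ hδ.le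
    intro x
    change ‖κ e (η a x) - ι (H.inc e a) x‖ ≤ _
    rw [BoundedContinuousFunction.norm_le (by positivity)]
    intro t
    have h1 := ContinuousLinearMap.le_of_opNorm_le _ ((t.2.2.2 e a).trans hnδ) x
    exact h1

end ARPaux

/-- Approximate Ramsey property of the class of finite-dimensional complex normed spaces
equipped with a distinguished contractive functional. -/
theorem arp_normed_spaces_with_functional
    (X Y : Type u) [NormedAddCommGroup X] [NormedSpace ℂ X] [FiniteDimensional ℂ X]
    [NormedAddCommGroup Y] [NormedSpace ℂ Y] [FiniteDimensional ℂ Y]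
    (sX : X →L[ℂ] ℂ) (hsX : ‖sX‖ ≤ 1) (sY : Y →L[ℂ] ℂ) (hsY : ‖sY‖ ≤ 1)
    (r : ℕ) (ε : ℝ) (hε : 0 < ε) :
    ∃ (Z : Type u) (_ : NormedAddCommGroup Z) (_ : NormedSpace ℂ Z)
      (_ : FiniteDimensional ℂ Z) (sZ : Z →L[ℂ] ℂ), ‖sZ‖ ≤ 1 ∧
      ∀ c : {φ : X →L[ℂ] Z // (∀ x, ‖φ x‖ = ‖x‖) ∧ sZ.comp φ = sX} → Fin r,
        ∃ (γ : Y →L[ℂ] Z) (_ : ∀ y, ‖γ y‖ = ‖y‖) (_ : sZ.comp γ = sY) (j : Fin r),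
          ∀ η : X →L[ℂ] Y, (∀ x, ‖η x‖ = ‖x‖) → sY.comp η = sX →
            ∃ (ξ : X →L[ℂ] Z) (hξ : (∀ x, ‖ξ x‖ = ‖x‖) ∧ sZ.comp ξ = sX),
              c ⟨ξ, hξ⟩ = j ∧ ‖γ.comp η - ξ‖ ≤ ε := by
  rcases Nat.eq_zero_or_pos r with rfl | hr
  · refine ⟨X, inferInstance, inferInstance, inferInstance, sX, hsX, fun c => ?_⟩
    exact (c ⟨ContinuousLinearMap.id ℂ X, fun x => rfl, by ext x; rfl⟩).elim0
  let s : Set (X →L[ℂ] Y) := {η | (∀ x, ‖η x‖ = ‖x‖) ∧ sY.comp η = sX}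
  have hs : TotallyBounded s := by
    have : ProperSpace (X →L[ℂ] Y) := FiniteDimensional.proper ℂ _
    refine (isCompact_closedBall (0 : X →L[ℂ] Y) 1).totallyBounded.subset ?_
    intro η hη
    rw [mem_closedBall_zero_iff]
    exact ContinuousLinearMap.opNorm_le_bound _ zero_le_one (fun x => by rw [hη.1, one_mul])
  obtain ⟨t, hts, htf, hcov⟩ := Metric.finite_approx_of_totallyBounded hs (ε / 2) (half_pos hε)
  have := htf.to_subtype
  obtain ⟨k, ⟨q⟩⟩ := Finite.exists_equiv_fin t
  obtain ⟨Z, i1, i2, i3, sZ, hsZ, h⟩ := ARPaux.finite_ramsey X Y sX hsX sY hsY r hr (ε / 2)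
    (half_pos hε) (Fin k) (fun a => (q.symm a : X →L[ℂ] Y)) (fun a => (hts (q.symm a).2).1)
    (fun a => (hts (q.symm a).2).2)
  refine ⟨Z, i1, i2, i3, sZ, hsZ, fun c => ?_⟩
  obtain ⟨γ, hγ1, hγ2, j, hj⟩ := h c
  refine ⟨γ, hγ1, hγ2, j, fun η hη1 hη2 => ?_⟩
  have hmem := hcov (show η ∈ s from ⟨hη1, hη2⟩)
  simp only [Set.mem_iUnion] at hmem
  obtain ⟨η', hη', hd⟩ := hmem
  obtain ⟨ξ, hξ, h1, h2⟩ := hj (q ⟨η', hη'⟩)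
  refine ⟨ξ, hξ, h1, ?_⟩
  simp only [Equiv.symm_apply_apply] at h2
  have h3 : ‖γ.comp (η - η')‖ ≤ ε / 2 := by
    apply ContinuousLinearMap.opNorm_le_bound _ (half_pos hε).le
    intro x
    rw [ContinuousLinearMap.comp_apply, hγ1]
    rw [Metric.mem_ball, dist_eq_norm] at hd
    exact ContinuousLinearMap.le_of_opNorm_le _ hd.le x
  have h4 : γ.comp η - ξ = γ.comp (η - η') + (γ.comp η' - ξ) := by
    rw [ContinuousLinearMap.comp_sub]; abel
  rw [h4]
  exact (norm_add_le _ _).trans (by linarith)
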